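/- If k convex sets S_1, ..., S_k cover a Euclidean ball of radius r in R^d, then there exists an index i such that S_i contains a Euclidean ball of radius r/(k·d^d). -/

import Mathlib

/-- Finite-dimensional weak separation of a point from an arbitrary convex set. -/
theorem ccb_separate (d : ℕ) (hd : 0 < d) (T : Set (EuclideanSpace ℝ (Fin d)))
    (hT : Convex ℝ T) (y : EuclideanSpace ℝ (Fin d)) (hy : y ∉ T) :
    ∃ u : EuclideanSpace ℝ (Fin d), ‖u‖ = 1 ∧ ∀ z ∈ T, inner ℝ u z ≤ inner ℝ u y := by
  suffices h : ∃ u : EuclideanSpace ℝ (Fin d), u ≠ 0 ∧ ∀ z ∈ T, inner ℝ u z ≤ inner ℝ u y by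
    obtain ⟨u, hu, h⟩ := h
    refine ⟨‖u‖⁻¹ • u, ?_, ?_⟩
    · rw [norm_smul, norm_inv, norm_norm]
      exact inv_mul_cancel₀ (norm_ne_zero_iff.2 hu)
    · intro z hz
      rw [real_inner_smul_left, real_inner_smul_left]
      exact mul_le_mul_of_nonneg_left (h z hz) (by positivity)
  by_cases hi : (interior T).Nonempty
  · obtain ⟨f, hf, h⟩ := geometric_hahn_banach_of_nonempty_interior_point hT
      (fun h => hy (interior_subset h)) hi
    refine ⟨(InnerProductSpace.toDual ℝ _).symm f, ?_, ?_⟩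
    · simpa using hf
    · intro z hz
      simpa using h z hz
  · rcases T.eq_empty_or_nonempty with rfl | ⟨z0, hz0⟩
    · refine ⟨EuclideanSpace.single ⟨0, hd⟩ 1, ?_, by simp⟩
      simp
    have hs : affineSpan ℝ T ≠ ⊤ := fun h => hi (hT.interior_nonempty_iff_affineSpan_eq_top.2 h)
    have hdir : (affineSpan ℝ T).direction ≠ ⊤ := by
      intro h
      exact hs ((AffineSubspace.direction_eq_top_iff_of_nonempty
        ⟨z0, subset_affineSpan ℝ T hz0⟩).1 h)
    have hb : (affineSpan ℝ T).directionᗮ ≠ ⊥ := by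
      rwa [Ne, Submodule.orthogonal_eq_bot_iff]
    obtain ⟨u, hu, hu0⟩ := Submodule.exists_mem_ne_zero_of_ne_bot hb
    have hc : ∀ z ∈ T, inner ℝ u z = inner ℝ u z0 := by
      intro z hz
      have h1 : z - z0 ∈ (affineSpan ℝ T).direction := by
        rw [← vsub_eq_sub]
        exact AffineSubspace.vsub_mem_direction (subset_affineSpan ℝ T hz)
          (subset_affineSpan ℝ T hz0)
      have h2 := (Submodule.mem_orthogonal' _ u).1 hu _ h1
      rw [inner_sub_right] at h2
      linarith
    rcases le_total (inner ℝ u z0) (inner ℝ u y) with h | h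
    · exact ⟨u, hu0, fun z hz => (hc z hz).trans_le h⟩
    · refine ⟨-u, neg_ne_zero.2 hu0, fun z hz => ?_⟩
      rw [inner_neg_left, inner_neg_left, hc z hz]
      linarith

/-- Minkowski asymmetry via Helly. -/
theorem ccb_center (d : ℕ) (hd : 0 < d) (K : Set (EuclideanSpace ℝ (Fin d)))
    (hK : Convex ℝ K) (hc : IsCompact K) :
    ∃ x : EuclideanSpace ℝ (Fin d), ∀ y ∈ K, ∃ z ∈ K, ((d : ℝ) + 1) • x = (d : ℝ) • z + y := by
  have hd' : (0 : ℝ) < d := by exact_mod_cast hd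
  let F : K → Set (EuclideanSpace ℝ (Fin d)) := fun y =>
    (fun z => ((d : ℝ) + 1)⁻¹ • (y : EuclideanSpace ℝ (Fin d)) + ((d : ℝ) / (d + 1)) • z) '' K
  have hF : (⋂ i, F i).Nonempty := by
    apply Convex.helly_theorem_compact' (𝕜 := ℝ)
    · intro y
      have := (hK.smul ((d : ℝ) / (d + 1))).translate
        (((d : ℝ) + 1)⁻¹ • (y : EuclideanSpace ℝ (Fin d)))
      rw [← Set.image_smul, Set.image_image] at this
      exact this
    · intro y
      exact hc.image (by fun_prop)
    · intro I hI
      rw [finrank_euclideanSpace_fin] at hI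
      rcases I.eq_empty_or_nonempty with rfl | hne
      · simp
      have hn : (0 : ℝ) < I.card := by exact_mod_cast hne.card_pos
      have hI' : (I.card : ℝ) ≤ d + 1 := by exact_mod_cast hI
      refine ⟨∑ j ∈ I, ((I.card : ℝ))⁻¹ • (j : EuclideanSpace ℝ (Fin d)), ?_⟩
      simp only [Set.mem_iInter]
      intro i hi
      classical
      refine ⟨∑ j ∈ I, ((((I.card : ℝ))⁻¹ - if j = i then ((d : ℝ) + 1)⁻¹ else 0) *
        ((d + 1) / d)) • (j : EuclideanSpace ℝ (Fin d)), ?_, ?_⟩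
      · apply hK.sum_mem
        · intro j hj
          have : ((d : ℝ) + 1)⁻¹ ≤ (I.card : ℝ)⁻¹ := inv_anti₀ hn hI'
          apply mul_nonneg _ (by positivity)
          split_ifs
          · linarith
          · simp
        · rw [← Finset.sum_mul, Finset.sum_sub_distrib, Finset.sum_ite_eq' I i]
          simp only [Finset.sum_const, nsmul_eq_mul, hi, if_true]
          field_simp
          ring
        · intro j _
          exact j.2
      · simp only [Finset.smul_sum, smul_smul]
        have : ((d : ℝ) + 1)⁻¹ • (i : EuclideanSpace ℝ (Fin d)) =
            ∑ j ∈ I, (if j = i then ((d : ℝ) + 1)⁻¹ else 0) • (j : EuclideanSpace ℝ (Fin d)) := by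
          simp [ite_smul, Finset.sum_ite_eq', hi]
        rw [this, ← Finset.sum_add_distrib]
        refine Finset.sum_congr rfl fun j _ => ?_
        rw [← add_smul]
        congr 1
        field_simp
        ring
  obtain ⟨x, hx⟩ := hF
  refine ⟨x, fun y hy => ?_⟩
  obtain ⟨z, hz, h⟩ := Set.mem_iInter.1 hx ⟨y, hy⟩
  refine ⟨z, hz, ?_⟩
  rw [← h]
  simp only [smul_add, smul_smul]
  rw [mul_inv_cancel₀ (by positivity), mul_div_cancel₀ _ (by positivity), one_smul, add_comm]

/-- A bounded convex set with no ball of radius `ρ` lies in a narrow (half-open) slab. -/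
theorem ccb_slab (d : ℕ) (hd : 0 < d) (T : Set (EuclideanSpace ℝ (Fin d)))
    (hT : Convex ℝ T) (hb : Bornology.IsBounded T) (w : ℝ) (hw : 0 < w)
    (h : ∀ c', ¬ Metric.closedBall c' (w / d ^ d) ⊆ T) :
    ∃ (u : EuclideanSpace ℝ (Fin d)) (m : ℝ), ‖u‖ = 1 ∧
      ∀ z ∈ T, m - w ≤ inner ℝ u z ∧ inner ℝ u z < m + w := by
  have hd' : (0 : ℝ) < d := by exact_mod_cast hd
  set ρ := w / (d : ℝ) ^ d with hρ
  have hρ0 : 0 < ρ := by positivity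
  obtain ⟨x, hx⟩ := ccb_center d hd (closure T) hT.closure hb.isCompact_closure
  obtain ⟨y, hyb, hyT⟩ := Set.not_subset.1 (h x)
  obtain ⟨u, hu, hs⟩ := ccb_separate d hd T hT y hyT
  have hyx : inner ℝ u y ≤ inner ℝ u x + ρ := by
    have h1 := real_inner_le_norm u (y - x)
    rw [hu, one_mul, inner_sub_right] at h1
    rw [Metric.mem_closedBall, dist_eq_norm] at hyb
    linarith
  have hcl : ∀ z ∈ closure T, inner ℝ u z ≤ inner ℝ u y := by
    intro z hz
    have : IsClosed {z : EuclideanSpace ℝ (Fin d) | inner ℝ u z ≤ inner ℝ u y} :=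
      isClosed_le (by fun_prop) (by fun_prop)
    exact closure_minimal hs this hz
  have hlow : ∀ z ∈ T, inner ℝ u x - d * ρ ≤ inner ℝ u z := by
    intro z hz
    obtain ⟨z', hz', he⟩ := hx z (subset_closure hz)
    have h1 := congrArg (fun v => inner ℝ u v) he
    simp only [inner_add_right, real_inner_smul_right] at h1
    have h2 := (hcl z' hz').trans hyx
    nlinarith
  by_cases h1 : d = 1
  · subst h1
    have hρw : ρ = w := by simp [hρ]
    refine ⟨u, inner ℝ u x, hu, fun z hz => ⟨?_, ?_⟩⟩
    · have := hlow z hz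
      rw [hρw] at this
      simpa using this
    · refine lt_of_lt_of_le (lt_of_le_of_ne (hs z hz) ?_) (hρw ▸ hyx)
      intro he
      apply hyT
      have hu0 : u 0 ≠ 0 := by
        intro h0
        have : u = 0 := by
          ext i
          rw [Subsingleton.elim i 0, h0]
          rfl
        rw [this] at hu
        simp at hu
      have : z = y := by
        ext i
        rw [Subsingleton.elim i 0]
        simp only [PiLp.inner_apply, Finset.univ_unique, Finset.sum_singleton] at he
        have he' : z 0 * u 0 = y 0 * u 0 := by simpa using he
        exact mul_right_cancel₀ hu0 he'
      exact this ▸ hz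
  · have h2 : 2 ≤ d := by omega
    have h2' : (2 : ℝ) ≤ d := by exact_mod_cast h2
    have hdρ : d * ρ ≤ w / 2 := by
      have h3 : (d : ℝ) ^ 2 ≤ (d : ℝ) ^ d := pow_le_pow_right₀ (by linarith) h2
      have h4 : ρ ≤ w / (d : ℝ) ^ 2 := by
        rw [hρ]
        gcongr
      calc d * ρ ≤ d * (w / (d : ℝ) ^ 2) := by gcongr
        _ = w / d := by field_simp
        _ ≤ w / 2 := by gcongr
    refine ⟨u, inner ℝ u x, hu, fun z hz => ⟨?_, ?_⟩⟩
    · have := hlow z hz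
      linarith
    · have := hs z hz
      nlinarith

/-- Bang's lemma, with half-open planks of equal width. -/
theorem ccb_bang (d k : ℕ) (u : Fin k → EuclideanSpace ℝ (Fin d)) (m : Fin k → ℝ)
    (hu : ∀ i, ‖u i‖ = 1) (w : ℝ) (hw : 0 < w) :
    ∃ x : EuclideanSpace ℝ (Fin d), ‖x‖ ≤ k * w ∧
      ∀ i, inner ℝ (u i) x < m i - w ∨ m i + w ≤ inner ℝ (u i) x := by
  let s : Bool → ℝ := fun b => if b then 1 else -1
  let X : (Fin k → Bool) → EuclideanSpace ℝ (Fin d) := fun e => ∑ j, (s (e j) * w) • u j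
  let M : (Fin k → Bool) → ℝ := fun e => ∑ j, s (e j) * (w * m j)
  let N : (Fin k → Bool) → ℝ := fun e => ∑ j, s (e j)
  obtain ⟨e, he⟩ := Finite.exists_max
    (fun e : Fin k → Bool => toLex (‖X e‖ ^ 2 - 2 * M e, N e))
  have gen : ∀ (V : Type) [AddCommGroup V] [Module ℝ V] (v : Fin k → V) (i : Fin k) (b : Bool),
      ∑ j, s (Function.update e i b j) • v j = ∑ j, s (e j) • v j + (s b - s (e i)) • v i := by
    intro V _ _ v i b
    rw [← sub_eq_iff_eq_add', ← Finset.sum_sub_distrib, Finset.sum_eq_single i]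
    · simp [sub_smul]
    · intro j _ hj
      simp [Function.update_of_ne hj]
    · simp
  refine ⟨X e, ?_, fun i => ?_⟩
  · calc ‖X e‖ ≤ ∑ j, ‖(s (e j) * w) • u j‖ := norm_sum_le _ _
      _ = ∑ j : Fin k, w := by
        refine Finset.sum_congr rfl fun j _ => ?_
        rw [norm_smul, hu, mul_one, norm_mul, Real.norm_of_nonneg hw.le]
        have : ‖s (e j)‖ = 1 := by
          simp only [s]
          split_ifs <;> simp
        rw [this, one_mul]
      _ = k * w := by simp
  · have hXu : ∀ b, X (Function.update e i b) = X e + ((s b - s (e i)) * w) • u i := by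
      intro b
      simpa only [X, mul_smul] using gen _ (fun j => w • u j) i b
    have hMu : ∀ b, M (Function.update e i b) = M e + (s b - s (e i)) * (w * m i) := by
      intro b
      simpa only [M, smul_eq_mul] using gen _ (fun j => w * m j) i b
    have hNu : ∀ b, N (Function.update e i b) = N e + (s b - s (e i)) := by
      intro b
      simpa only [N, smul_eq_mul, mul_one] using gen _ (fun j => (1 : ℝ)) i b
    have hnorm : ∀ t : ℝ, ‖X e + t • u i‖ ^ 2 = ‖X e‖ ^ 2 + 2 * (t * inner ℝ (u i) (X e)) + t ^ 2 := by
      intro t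
      rw [norm_add_sq_real, real_inner_smul_right, norm_smul, hu, mul_one, Real.norm_eq_abs,
        sq_abs, real_inner_comm]
    have key := he (Function.update e i (!(e i)))
    rw [Prod.Lex.toLex_le_toLex] at key
    simp only [hXu, hMu, hNu, hnorm] at key
    cases hei : e i
    · left
      simp only [hei, s] at key
      norm_num at key
      nlinarith
    · right
      simp only [hei, s] at key
      norm_num at key
      have key' : ‖X e‖ ^ 2 + 2 * ((-2) * w * inner ℝ (u i) (X e)) + ((-2) * w) ^ 2
          - 2 * (M e + (-2) * (w * m i)) ≤ ‖X e‖ ^ 2 - 2 * M e := by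
        rcases key with key | key
        · linarith
        · linarith
      by_contra hcon
      push Not at hcon
      nlinarith

theorem convex_cover_ball (d k : ℕ) (hd : 0 < d) (hk : 0 < k)
    (S : Fin k → Set (EuclideanSpace ℝ (Fin d))) (hS : ∀ i, Convex ℝ (S i))
    (c : EuclideanSpace ℝ (Fin d)) (r : ℝ) (hr : 0 < r)
    (hcov : Metric.closedBall c r ⊆ ⋃ i, S i) :
    ∃ (i : Fin k) (c' : EuclideanSpace ℝ (Fin d)),
      Metric.closedBall c' (r / (k * d ^ d)) ⊆ S i := by
  by_contra hcon
  push Not at hcon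
  have hk' : (0 : ℝ) < k := by exact_mod_cast hk
  have hw : 0 < r / k := by positivity
  have hsl := fun i => ccb_slab d hd (S i ∩ Metric.closedBall c r)
    ((hS i).inter (convex_closedBall c r))
    (Metric.isBounded_closedBall.subset Set.inter_subset_right) (r / k) hw (by
      intro c' h
      apply hcon i c'
      rw [← div_div]
      exact h.trans Set.inter_subset_left)
  choose u m hu hz using hsl
  obtain ⟨x, hx, hav⟩ := ccb_bang d k u (fun i => m i - inner ℝ (u i) c) hu (r / k) hw
  have hxb : c + x ∈ Metric.closedBall c r := by
    rw [Metric.mem_closedBall, dist_eq_norm, add_sub_cancel_left]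
    rwa [mul_div_cancel₀ _ hk'.ne'] at hx
  obtain ⟨i, hi⟩ := Set.mem_iUnion.1 (hcov hxb)
  have h1 := hz i (c + x) ⟨hi, hxb⟩
  rw [inner_add_right] at h1
  rcases hav i with h | h
  · linarith [h1.1]
  · linarith [h1.2]
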